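/- Let G : ℕ → ℕ be defined by G(0) = G(1) = 0 and, for n ≥ 2, G(n) = mex({G(i) XOR G(n−i−2) : 0 ≤ i ≤ n−2} ∪ {G(j) XOR 1 XOR G(n−j−1) : 0 ≤ j ≤ n−1}), where XOR is bitwise addition of natural numbers and mex(T) is the least nonnegative integer not in T. Then for every n ≥ 1, G(n) = 0 if and only if n ≡ 1 (mod 12). -/

import Mathlib

/-- `mex T` is the least nonnegative integer not in `T`. -/
noncomputable def mex (T : Finset ℕ) : ℕ := sInf {n : ℕ | n ∉ T}

/-- Grundy numbers of the Remove-a-Square game on a 2-by-`n` rectangle: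
`G 0 = G 1 = 0`, and for `n ≥ 2`,
`G n = mex ({G i XOR G (n-i-2) : 0 ≤ i ≤ n-2} ∪ {G j XOR 1 XOR G (n-j-1) : 0 ≤ j ≤ n-1})`. -/
noncomputable def G : ℕ → ℕ
  | 0 => 0
  | 1 => 0
  | n + 2 =>
      mex
        (((Finset.range (n + 1)).attach.image
            (fun i => G i.1 ^^^ G (n - i.1))) ∪
         ((Finset.range (n + 2)).attach.image
            (fun j => G j.1 ^^^ 1 ^^^ G (n + 1 - j.1))))
decreasing_by
  · have := Finset.mem_range.mp i.2; omega
  · omega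
  · have := Finset.mem_range.mp j.2; omega
  · omega

/-!
By the Guy–Smith argument, a sequence whose `n`-th term is computed from the pairs of terms with
index sum `n - t`, `1 ≤ t ≤ T`, and which repeats with period `p` from `n₀` for long enough,
repeats forever: a move in a row of length `n + p ≥ 2 * n₀ + 2 * p + T - 1` always leaves a part of
length at least `n₀ + p`, which may be shortened by `p`. For `G` the period is `12` from `n₀ = 71`
on, so that only finitely many values have to be computed.
-/

/-- The values `op (g i) (g k)` reachable from a row of length `n`: a move `(t, op) ∈ M` deletes
`t` consecutive cells, leaving rows of lengths `i` and `k` whose values `op` combines. -/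
def splitValues {α : Type*} (M : Set (ℕ × (α → α → α))) (g : ℕ → α) (n : ℕ) : Set α :=
  {v | ∃ t op, (t, op) ∈ M ∧ ∃ i k, i + k + t = n ∧ op (g i) (g k) = v}

section Periodicity

variable {α : Type*} {M : Set (ℕ × (α → α → α))} {g : ℕ → α} {n₀ p T : ℕ}

theorem splitValues_add_eq (hM : ∀ m ∈ M, m.1 ∈ Set.Icc 1 T) {n : ℕ} (hn : 2 * n₀ + p + T ≤ n + 1)
    (hg : ∀ j < n, n₀ ≤ j → g (j + p) = g j) :
    splitValues M g (n + p) = splitValues M g n := by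
  ext v
  constructor
  · rintro ⟨t, op, hm, i, k, hik, rfl⟩
    obtain ⟨ht, htT⟩ : 1 ≤ t ∧ t ≤ T := hM _ hm
    obtain hi | hk : n₀ + p ≤ i ∨ n₀ + p ≤ k := by omega
    · obtain ⟨i, rfl⟩ : ∃ j, i = j + p := Nat.exists_eq_add_of_le' (by omega)
      exact ⟨t, op, hm, i, k, by omega, by rw [hg i (by omega) (by omega)]⟩
    · obtain ⟨k, rfl⟩ : ∃ j, k = j + p := Nat.exists_eq_add_of_le' (by omega)
      exact ⟨t, op, hm, i, k, by omega, by rw [hg k (by omega) (by omega)]⟩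
  · rintro ⟨t, op, hm, i, k, hik, rfl⟩
    obtain ⟨ht, htT⟩ : 1 ≤ t ∧ t ≤ T := hM _ hm
    obtain hi | hk : n₀ ≤ i ∨ n₀ ≤ k := by omega
    · exact ⟨t, op, hm, i + p, k, by omega, by rw [hg i (by omega) hi]⟩
    · exact ⟨t, op, hm, i, k + p, by omega, by rw [hg k (by omega) hk]⟩

theorem guySmith_periodicity (hM : ∀ m ∈ M, m.1 ∈ Set.Icc 1 T) {Φ : Set α → α}
    (hΦ : ∀ n, g n = Φ (splitValues M g n))
    (hbase : ∀ n, n₀ ≤ n → n + 1 < 2 * n₀ + p + T → g (n + p) = g n) (n : ℕ) (hn : n₀ ≤ n) :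
    g (n + p) = g n := by
  induction n using Nat.strong_induction_on with
  | _ n ih =>
    obtain hlt | hle := Nat.lt_or_ge (n + 1) (2 * n₀ + p + T)
    · exact hbase n hn hlt
    · rw [hΦ (n + p), splitValues_add_eq hM hle ih, ← hΦ n]

end Periodicity

/-- The moves of Remove-a-Square: a 2-by-2 square takes two columns, a 1-by-1 square takes one
column and leaves its other cell, of Grundy number `1`, as a third component. -/
def squareMoves : Set (ℕ × (ℕ → ℕ → ℕ)) :=
  {(2, fun a b ↦ a ^^^ b), (1, fun a b ↦ a ^^^ 1 ^^^ b)}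

theorem mem_splitValues_squareMoves {g : ℕ → ℕ} {n v : ℕ} :
    v ∈ splitValues squareMoves g n ↔
      (∃ i k, i + k + 2 = n ∧ g i ^^^ g k = v) ∨
        ∃ i k, i + k + 1 = n ∧ g i ^^^ 1 ^^^ g k = v := by
  simp [splitValues, squareMoves, or_and_right, exists_or]

theorem mem_splitValues_squareMoves_add_two {g : ℕ → ℕ} {n v : ℕ} :
    v ∈ splitValues squareMoves g (n + 2) ↔
      (∃ i < n + 1, g i ^^^ g (n - i) = v) ∨ ∃ j < n + 2, g j ^^^ 1 ^^^ g (n + 1 - j) = v := by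
  rw [mem_splitValues_squareMoves]
  refine or_congr (exists_congr fun i ↦ ⟨?_, fun ⟨_, hv⟩ ↦ ⟨n - i, by omega, hv⟩⟩)
    (exists_congr fun j ↦ ⟨?_, fun ⟨_, hv⟩ ↦ ⟨n + 1 - j, by omega, hv⟩⟩)
  · rintro ⟨k, hik, rfl⟩
    exact ⟨by omega, by rw [show n - i = k by omega]⟩
  · rintro ⟨k, hjk, rfl⟩
    exact ⟨by omega, by rw [show n + 1 - j = k by omega]⟩

theorem G_eq_sInf_compl_splitValues (n : ℕ) : G n = sInf (splitValues squareMoves G n)ᶜ := by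
  have hG₀ : G 0 = 0 := by rw [G]
  have hG₁ : G 1 = 0 := by rw [G]
  match n with
  | 0 =>
    have : 0 ∉ splitValues squareMoves G 0 := by simp [mem_splitValues_squareMoves]
    rw [hG₀, eq_comm, Nat.sInf_eq_zero]
    exact .inl this
  | 1 =>
    have : 0 ∉ splitValues squareMoves G 1 := by simp [mem_splitValues_squareMoves, hG₀]
    rw [hG₁, eq_comm, Nat.sInf_eq_zero]
    exact .inl this
  | n + 2 =>
    rw [G, mex]
    congr 1
    ext v
    simp [mem_splitValues_squareMoves_add_two]

/-- The least natural number not in the list `l`, in a form that the kernel can evaluate: by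
pigeonhole, it suffices to search up to the length of `l`. -/
def listMex (l : List ℕ) : ℕ :=
  (List.range (l.length + 1)).findIdx (· ∉ l)

theorem listMex_eq_sInf (l : List ℕ) : listMex l = sInf {v | v ∈ l}ᶜ := by
  have hlt : listMex l < (List.range (l.length + 1)).length := by
    rw [listMex, List.findIdx_lt_length]
    by_contra! hall
    have hcard : (Finset.range (l.length + 1)).card ≤ l.toFinset.card :=
      Finset.card_le_card fun v hv ↦ by simpa using hall v (by simpa using hv)
    have := l.toFinset_card_le
    rw [Finset.card_range] at hcard
    omega
  have hnotMem : listMex l ∉ l := by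
    simpa [listMex] using List.findIdx_getElem (w := hlt)
  refine le_antisymm (le_csInf ⟨_, hnotMem⟩ fun v hv ↦ ?_) (Nat.sInf_le hnotMem)
  by_contra! hvlt
  exact hv (by simpa using List.not_of_lt_findIdx hvlt)

/-- The Grundy numbers of the options of the 2-by-`n` rectangle, when `l` lists `G 0, …, G (n - 1)`:
zipping `l` with its reverse pairs the indices with sum `n - 1`. -/
def listOptions (l : List ℕ) : List ℕ :=
  l.dropLast.zipWith (· ^^^ ·) l.dropLast.reverse ++ l.zipWith (· ^^^ 1 ^^^ ·) l.reverse

/-- The list `G 0, …, G (n - 1)`, in a form that the kernel can evaluate. -/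
def grundyList : ℕ → List ℕ
  | 0 => []
  | n + 1 => grundyList n ++ [listMex (listOptions (grundyList n))]

theorem mem_zipWith_reverse_map_range {α β : Type*} {g : ℕ → α} {op : α → α → β} {n : ℕ} {v : β} :
    v ∈ ((List.range n).map g).zipWith op ((List.range n).map g).reverse ↔
      ∃ i k, i + k + 1 = n ∧ op (g i) (g k) = v := by
  simp only [List.mem_iff_getElem, List.getElem_zipWith, List.getElem_reverse, List.getElem_map,
    List.getElem_range, List.length_zipWith, List.length_reverse, List.length_map,
    List.length_range, min_self, exists_prop]
  refine exists_congr fun i ↦ ⟨fun ⟨_, hv⟩ ↦ ⟨n - 1 - i, by omega, hv⟩, ?_⟩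
  rintro ⟨k, rfl, rfl⟩
  exact ⟨by omega, by rw [show i + k + 1 - 1 - i = k by omega]⟩

theorem mem_listOptions_map_range {g : ℕ → ℕ} {n v : ℕ} :
    v ∈ listOptions ((List.range n).map g) ↔ v ∈ splitValues squareMoves g n := by
  have hdrop : ((List.range n).map g).dropLast = (List.range (n - 1)).map g := by
    cases n <;> simp [List.range_succ]
  rw [listOptions, hdrop, List.mem_append, mem_zipWith_reverse_map_range,
    mem_zipWith_reverse_map_range, mem_splitValues_squareMoves]
  simp only [show ∀ i k, i + k + 1 = n - 1 ↔ i + k + 2 = n by omega]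

theorem grundyList_eq_map_range (n : ℕ) : grundyList n = (List.range n).map G := by
  induction n with
  | zero => rfl
  | succ n ih =>
    have hmex : listMex (listOptions ((List.range n).map G)) = G n := by
      simp only [listMex_eq_sInf, mem_listOptions_map_range, Set.ofPred_mem_eq,
        ← G_eq_sInf_compl_splitValues]
    rw [grundyList, ih, hmex, List.range_succ, List.map_append, List.map_singleton]

theorem getElem?_grundyList {n m : ℕ} (h : m < n) : (grundyList n)[m]? = some (G m) := by
  simp [grundyList_eq_map_range, h]

theorem G_add_twelve_of_lt {n : ℕ} (hn : 71 ≤ n) (hlt : n < 155) : G (n + 12) = G n := by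
  have hcheck : ∀ n < 155, 71 ≤ n → (grundyList 167)[n + 12]? = (grundyList 167)[n]? := by
    decide +kernel
  simpa only [getElem?_grundyList (show n + 12 < 167 by omega),
    getElem?_grundyList (show n < 167 by omega), Option.some_inj] using hcheck n hlt hn

theorem G_add_twelve (n : ℕ) (hn : 71 ≤ n) : G (n + 12) = G n := by
  have hM : ∀ m ∈ squareMoves, m.1 ∈ Set.Icc 1 2 := by simp [squareMoves]
  exact guySmith_periodicity (Φ := fun S ↦ sInf Sᶜ) hM G_eq_sInf_compl_splitValues
    (fun n hn hlt ↦ G_add_twelve_of_lt hn (by omega)) n hn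

theorem G_eq_zero_iff_of_lt {n : ℕ} (hn : 1 ≤ n) (hlt : n < 83) : G n = 0 ↔ n % 12 = 1 := by
  have hcheck : ∀ n < 83, 1 ≤ n → ((grundyList 83)[n]? = some 0 ↔ n % 12 = 1) := by
    decide +kernel
  simpa only [getElem?_grundyList hlt, Option.some_inj] using hcheck n hlt hn

/-- **Remove-a-Square P-positions.** For every `n ≥ 1`, the Grundy number `G n`
is `0` if and only if `n ≡ 1 (mod 12)`. -/
theorem remove_a_square_P_positions : ∀ n : ℕ, 1 ≤ n → (G n = 0 ↔ n % 12 = 1) := by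
  intro n hn
  induction n using Nat.strong_induction_on with
  | _ n ih =>
    obtain hlt | hle := Nat.lt_or_ge n 83
    · exact G_eq_zero_iff_of_lt hn hlt
    · obtain ⟨m, rfl⟩ : ∃ m, n = m + 12 := Nat.exists_eq_add_of_le' (by omega)
      rw [G_add_twelve m (by omega), ih m (by omega) (by omega), Nat.add_mod_right]
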